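/- arXiv:2111.10126 — 2 statements merged into one kernel-verified Lean document; each statement's English description precedes it below -/
import Mathlib

section
/- Let ℓ, t, k, d, m be positive integers, let F be a finite field, and suppose that for some integer b > ℓ/k there is an F-linear code C ⊆ (F^b)^k with dim_F(C) ≥ ℓ and block distance at least dt+1. Then there is a t-private, k-server linear HSS for POLY_{d,m}(F)^ℓ in which each of the ℓm inputs is shared by t-private k-party CNF sharing (total upload cost k·ℓ·m·binom(k−1,t)·log₂|F| bits), each output share lies in F^b, and reconstruction is by a single F-linear map not depending on the evaluated functions; in particular the download rate is ℓ/(kb). -/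
/-!
Let `G : F^ℓ → C` be an injective linear encoder; reconstruction is its transpose
`dualRec G : (F^b)^k → F^ℓ`. If `U` is a set of at most `d * t` servers, no nonzero codeword is
supported on `U`, i.e. `G` followed by restriction to the blocks outside `U` is injective; dually,
`dualRec G` restricted to vectors vanishing on `U` is surjective (`exists_dualRec_eq`). Hence for
every such `U` and every `i` there is a weight vector `w U i`, zero on `U`, with
`dualRec G (w U i) = eᵢ`.

Substituting `x q = ∑ S, X (q, S)` into a polynomial of degree at most `d` gives a polynomial in the
CNF shares, still of degree at most `d` (`sharePoly`). Each of its monomials `e` involves at most `d`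
shares, and server `j` fails to hold the share `(q, S)` only if `j ∈ S`, so all but at most `d * t`
servers (those in `missing e`) can compute the value of `e`. Server `j` outputs the sum over all `i`
and `e` of that value times block `j` of `w (missing e) i`; the servers that cannot compute it have
weight zero. Applying `dualRec G` turns the sum into `∑ i, f i (x i) • eᵢ`.

Privacy of CNF sharing holds because a coalition `T` of size at most `t ≤ k` lies in some `t`-set
`S₀`, whose share no member of `T` sees, so shifting that share is a bijection between the sharings of
two secrets with the same view of `T`.
-/

open scoped BigOperators

/-- The index type for the `t`-element subsets of `[k]`. -/
abbrev TSubset (k t : ℕ) : Type := {S : Finset (Fin k) // S.card = t}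

/-- `t`-privacy of `t`-private `k`-party CNF sharing: for any coalition `T` of at most `t`
parties, the joint view (the shares indexed by subsets missed by some member of `T`) has the
same distribution for any two secrets, the additive shares being uniform conditioned on
summing to the secret. -/
def CNFPrivate (F : Type) [Field F] [Fintype F] (k t : ℕ) : Prop :=
  ∀ T : Finset (Fin k), T.card ≤ t → ∀ x x' : F,
    ∀ v : {S : TSubset k t // ∃ j ∈ T, j ∉ S.1} → F,
      Nat.card {xs : TSubset k t → F //
          (∑ S, xs S = x) ∧ ∀ S : {S : TSubset k t // ∃ j ∈ T, j ∉ S.1}, xs S.1 = v S} =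
        Nat.card {xs : TSubset k t → F //
          (∑ S, xs S = x') ∧ ∀ S : {S : TSubset k t // ∃ j ∈ T, j ∉ S.1}, xs S.1 = v S}

theorem cnfPrivate_of_le (F : Type) [Field F] [Fintype F] {k t : ℕ} (htk : t ≤ k) :
    CNFPrivate F k t := by
  intro T hT x x' v
  obtain ⟨S₀, hTS, hS₀⟩ := Finset.exists_superset_card_eq hT (by simpa using htk)
  refine Nat.card_congr (Equiv.subtypeEquiv
    (Equiv.addRight (Pi.single (⟨S₀, hS₀⟩ : TSubset k t) (x' - x))) fun xs => ?_)
  have hview : ∀ S : {S : TSubset k t // ∃ j ∈ T, j ∉ S.1},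
      (Pi.single (⟨S₀, hS₀⟩ : TSubset k t) (x' - x) : TSubset k t → F) S.1 = 0 := by
    rintro ⟨S, j, hj, hjS⟩
    refine Pi.single_eq_of_ne ?_ _
    rintro rfl
    exact hjS (hTS hj)
  simp only [Equiv.coe_addRight, Pi.add_apply, Finset.sum_add_distrib, hview, add_zero,
    Finset.sum_pi_single', Finset.mem_univ, if_true]
  refine and_congr_left fun _ => ⟨fun h => by rw [h]; ring, fun h => ?_⟩
  linear_combination h

theorem card_cnf_share (k t : ℕ) (j : Fin k) :
    Nat.card {S : TSubset k t // j ∉ S.1} = (k - 1).choose t := by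
  have h : (Finset.powersetCard t (Finset.univ.erase j)).card = (k - 1).choose t := by
    simp [Finset.card_powersetCard, Finset.card_erase_of_mem]
  rw [← h, ← Nat.card_eq_finsetCard]
  refine Nat.card_congr
    { toFun := fun S => ⟨S.1.1, ?_⟩
      invFun := fun S => ⟨⟨S.1, ?_⟩, ?_⟩
      left_inv := fun _ => rfl
      right_inv := fun _ => rfl }
  · exact Finset.mem_powersetCard.mpr ⟨fun i hi => Finset.mem_erase.mpr
      ⟨fun hij => S.2 (hij ▸ hi), Finset.mem_univ i⟩, S.1.2⟩
  · exact (Finset.mem_powersetCard.mp S.2).2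
  · exact fun hj => Finset.notMem_erase j _ ((Finset.mem_powersetCard.mp S.2).1 hj)

/-- The transpose of an encoder `G`: coordinate `i` of `dualRec G v` is the dot product of `v`
with the codeword `G eᵢ`. -/
def dualRec {F : Type} [Field F] {ℓ k b : ℕ}
    (G : (Fin ℓ → F) →ₗ[F] (Fin k → (Fin b → F))) :
    (Fin k → (Fin b → F)) →ₗ[F] (Fin ℓ → F) where
  toFun v i := ∑ j, v j ⬝ᵥ G (Pi.single i 1) j
  map_add' v w := by
    ext i; simp [add_dotProduct, Finset.sum_add_distrib]
  map_smul' c v := by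
    ext i; simp [smul_dotProduct, Finset.mul_sum]

theorem dualRec_adjoint {F : Type} [Field F] {ℓ k b : ℕ}
    (G : (Fin ℓ → F) →ₗ[F] (Fin k → (Fin b → F))) (v : Fin k → (Fin b → F))
    (u : Fin ℓ → F) : dualRec G v ⬝ᵥ u = ∑ j, v j ⬝ᵥ G u j := by
  have hu : G u = ∑ i, u i • G (Pi.single i 1) := by
    conv_lhs => rw [pi_eq_sum_univ' u]
    simp [map_sum]
  simp only [hu, Finset.sum_apply, Pi.smul_apply, dotProduct_sum, dotProduct_smul]
  rw [Finset.sum_comm]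
  simp only [dotProduct, dualRec, LinearMap.coe_mk, AddHom.coe_mk, Finset.sum_mul,
    smul_eq_mul, ← Finset.mul_sum]
  simp only [Finset.mul_sum, mul_comm]

/-- If no nonzero message has a codeword supported on `U`, then the transpose of `G` is onto already
on vectors vanishing on `U`: a functional `u` killing the image satisfies `⟨v, G u⟩ = 0` for all such
`v`, so `G u` is supported on `U`. -/
theorem exists_dualRec_eq {F : Type} [Field F] {ℓ k b : ℕ}
    (G : (Fin ℓ → F) →ₗ[F] (Fin k → (Fin b → F))) (U : Finset (Fin k))
    (hG : ∀ u, (∀ j ∉ U, G u j = 0) → u = 0) (y : Fin ℓ → F) :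
    ∃ w : Fin k → (Fin b → F), (∀ j ∈ U, w j = 0) ∧ dualRec G w = y := by
  let W : Submodule F (Fin k → (Fin b → F)) :=
    { carrier := {w | ∀ j ∈ U, w j = 0}
      zero_mem' := fun _ _ => rfl
      add_mem' := fun {v w} hv hw j hj => by simp [hv j hj, hw j hj]
      smul_mem' := fun c w hw j hj => by simp [hw j hj] }
  suffices h : W.map (dualRec G) = ⊤ by
    have hy : y ∈ W.map (dualRec G) := h ▸ Submodule.mem_top
    exact hy
  by_contra hne
  obtain ⟨φ, hφ, hker⟩ := Submodule.exists_le_ker_of_lt_top _ (lt_top_iff_ne_top.mpr hne)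
  have hφu : ∀ z, φ z = z ⬝ᵥ fun i => φ (Pi.single i 1) := by
    intro z
    conv_lhs => rw [pi_eq_sum_univ' z]
    simp [map_sum, dotProduct]
  have hu := hG (fun i => φ (Pi.single i 1)) fun j hj => by
    ext a
    have hmem : (Pi.single j (Pi.single a 1) : Fin k → (Fin b → F)) ∈ W := by
      intro j' hj'
      exact Pi.single_eq_of_ne (by rintro rfl; exact hj hj') _
    have h0 : φ (dualRec G (Pi.single j (Pi.single a 1))) = 0 :=
      hker (Submodule.mem_map_of_mem hmem)
    rw [hφu, dualRec_adjoint, Finset.sum_eq_single j] at h0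
    · simpa using h0
    · intro j' _ hj'
      simp [Pi.single_eq_of_ne hj']
    · simp
  refine hφ (LinearMap.ext fun z => ?_)
  rw [hφu, hu]
  simp

theorem exists_encoder {F : Type} [Field F] {ℓ k b : ℕ}
    (C : Submodule F (Fin k → (Fin b → F))) (hdim : ℓ ≤ Module.finrank F C) :
    ∃ G : (Fin ℓ → F) →ₗ[F] (Fin k → (Fin b → F)), Function.Injective G ∧ ∀ u, G u ∈ C := by
  let B := Module.finBasis F C
  have hli : LinearIndependent F (B ∘ Fin.castLE hdim) :=
    B.linearIndependent.comp _ (Fin.castLE_injective hdim)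
  exact ⟨C.subtype ∘ₗ Fintype.linearCombination F (B ∘ Fin.castLE hdim),
    C.injective_subtype.comp hli.fintypeLinearCombination_injective, fun u => Subtype.prop _⟩

/-- The polynomial in the CNF shares `X (q, S)` obtained from `f` by substituting
`X q ↦ ∑ S, X (q, S)`. -/
noncomputable def sharePoly {F : Type} [Field F] {m : ℕ} (k t : ℕ)
    (f : MvPolynomial (Fin m) F) : MvPolynomial (Fin m × TSubset k t) F :=
  MvPolynomial.bind₁ (fun q => ∑ S, MvPolynomial.X (q, S)) f

theorem eval_sharePoly {F : Type} [Field F] {m k t : ℕ} (f : MvPolynomial (Fin m) F)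
    (xs : Fin m → TSubset k t → F) (x : Fin m → F) (hx : ∀ q, ∑ S, xs q S = x q) :
    MvPolynomial.eval (fun p : Fin m × TSubset k t => xs p.1 p.2) (sharePoly k t f) =
      MvPolynomial.eval x f := by
  have : x = fun q => MvPolynomial.eval (fun p : Fin m × TSubset k t => xs p.1 p.2)
      (∑ S, MvPolynomial.X (q, S)) := by
    ext q; simp [hx]
  rw [this, sharePoly]
  simp only [← MvPolynomial.aeval_eq_eval]
  exact MvPolynomial.aeval_bind₁ _ _ _

theorem totalDegree_sharePoly_le {F : Type} [Field F] {m k t : ℕ}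
    (f : MvPolynomial (Fin m) F) : (sharePoly k t f).totalDegree ≤ f.totalDegree := by
  rw [sharePoly, MvPolynomial.bind₁, MvPolynomial.aeval_def, MvPolynomial.eval₂_eq]
  refine MvPolynomial.totalDegree_finsetSum_le fun e he => ?_
  have hX : ∀ q : Fin m,
      (∑ S : TSubset k t, (MvPolynomial.X (q, S) : MvPolynomial _ F)).totalDegree ≤ 1 :=
    fun q => MvPolynomial.totalDegree_finsetSum_le fun S _ => (MvPolynomial.totalDegree_X _).le
  calc _ ≤ 0 + ∑ q ∈ e.support, e q := by
        refine (MvPolynomial.totalDegree_mul _ _).trans (add_le_add ?_ ?_)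
        · exact (MvPolynomial.totalDegree_C _).le
        · refine (MvPolynomial.totalDegree_finsetProd _ _).trans (Finset.sum_le_sum fun q _ => ?_)
          exact (MvPolynomial.totalDegree_pow _ _).trans
            (by simpa using Nat.mul_le_mul_left (e q) (hX q))
    _ ≤ f.totalDegree := by
        rw [zero_add]
        exact MvPolynomial.le_totalDegree he

/-- The servers that do not hold every share occurring in the monomial `e`: server `j` lacks the
share `(q, S)` exactly when `j ∈ S`. -/
def missing {m k t : ℕ} (e : Fin m × TSubset k t →₀ ℕ) : Finset (Fin k) :=
  e.support.biUnion fun p => p.2.1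

theorem card_missing_le {F : Type} [Field F] {m k t d : ℕ}
    {f : MvPolynomial (Fin m) F} (hf : f.totalDegree ≤ d) {e : Fin m × TSubset k t →₀ ℕ}
    (he : e ∈ (sharePoly k t f).support) : (missing e).card ≤ d * t := by
  have h1 : (missing e).card ≤ e.support.card * t :=
    Finset.card_biUnion_le_card_mul _ _ _ fun p _ => p.2.2.le
  have h2 : e.support.card ≤ e.sum fun _ n => n := by
    rw [Finset.card_eq_sum_ones]
    exact Finset.sum_le_sum fun p hp => Nat.one_le_iff_ne_zero.mpr (Finsupp.mem_support_iff.mp hp)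
  exact h1.trans (Nat.mul_le_mul_right t
    (h2.trans ((MvPolynomial.le_totalDegree he).trans ((totalDegree_sharePoly_le f).trans hf))))

/-- **Download rate of HSS-for-polynomials follows from the distance of linear codes.**
Given an `F`-linear code `C ⊆ (F^b)^k` with `dim_F C ≥ ℓ` and block distance at least
`d*t + 1`, there is a `t`-private `k`-server linear HSS for `POLY_{d,m}(F)^ℓ` in which each
of the `ℓ·m` inputs is shared by `t`-private `k`-party CNF sharing (which is `t`-private,
and gives each server `(k-1).choose t` field elements per input, i.e. total upload cost
`k·ℓ·m·binom(k−1,t)·log₂|F|` bits), each output share lies in `F^b`, and reconstruction is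
a single `F`-linear map not depending on the evaluated functions; in particular the
download rate is `ℓ/(kb)`.  Correctness is stated for every additive CNF sharing of each
input. -/
theorem cnf_hss_for_polynomials (F : Type) [Field F] [Fintype F]
    (ℓ t k d m b : ℕ) (hℓ : 0 < ℓ) (ht : 0 < t) (hk : 0 < k) (hd : 0 < d) (hm : 0 < m)
    (hb : ℓ < b * k)
    (C : Submodule F (Fin k → (Fin b → F)))
    (hdim : ℓ ≤ Module.finrank F C)
    (hdist : ∀ c ∈ C, ∀ c' ∈ C, c ≠ c' → d * t + 1 ≤ Nat.card {j : Fin k // c j ≠ c' j}) :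
    CNFPrivate F k t ∧
    (∀ j : Fin k, Nat.card {S : TSubset k t // j ∉ S.1} = (k - 1).choose t) ∧
    ∃ (Eval : ∀ j : Fin k,
        (Fin ℓ → {f : MvPolynomial (Fin m) F // f.totalDegree ≤ d}) →
        (Fin ℓ → Fin m → ({S : TSubset k t // j ∉ S.1} → F)) → (Fin b → F))
      (Rec : (Fin k → (Fin b → F)) →ₗ[F] (Fin ℓ → F)),
      ∀ (f : Fin ℓ → {f : MvPolynomial (Fin m) F // f.totalDegree ≤ d})
        (x : Fin ℓ → Fin m → F)
        (xs : Fin ℓ → Fin m → TSubset k t → F),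
        (∀ i q, ∑ S, xs i q S = x i q) →
        Rec (fun j => Eval j f (fun i q S => xs i q S.1)) =
          fun i => MvPolynomial.eval (x i) (f i).1 := by
  obtain ⟨G, hGinj, hGC⟩ := exists_encoder C hdim
  -- A nonzero message is encoded by a codeword with more than `d * t` nonzero blocks.
  have hwt : ∀ U : Finset (Fin k), U.card ≤ d * t →
      ∀ u, (∀ j ∉ U, G u j = 0) → u = 0 := by
    intro U hU u hz
    by_contra hu
    have hne : G u ≠ 0 := fun h => hu (hGinj (by rw [h, map_zero]))
    have h1 := hdist (G u) (hGC u) 0 C.zero_mem hne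
    have h2 : Nat.card {j : Fin k // G u j ≠ (0 : Fin k → (Fin b → F)) j} ≤ U.card := by
      rw [← Nat.card_eq_finsetCard U]
      refine Nat.card_le_card_of_injective (β := U)
        (fun j => ⟨j.1, by_contra fun hj => j.2 (hz j.1 hj)⟩) ?_
      intro a c h
      exact Subtype.ext (congrArg (fun z : U => z.1) h)
    omega
  -- Since `0 < ℓ` there is a nonzero codeword, and it has more than `d * t ≥ t` blocks.
  have htk : t ≤ k := by
    by_contra hlt
    have hU : (Finset.univ : Finset (Fin k)).card ≤ d * t := by
      rw [Finset.card_univ, Fintype.card_fin]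
      nlinarith
    have h := hwt Finset.univ hU (Pi.single ⟨0, hℓ⟩ 1) (by simp)
    simpa using congrFun h ⟨0, hℓ⟩
  have hw : ∀ (U : Finset (Fin k)) (i : Fin ℓ), ∃ w : Fin k → (Fin b → F),
      U.card ≤ d * t → (∀ j ∈ U, w j = 0) ∧ dualRec G w = Pi.single i 1 := by
    intro U i
    by_cases hU : U.card ≤ d * t
    · obtain ⟨w, h⟩ := exists_dualRec_eq G U (hwt U hU) (Pi.single i 1)
      exact ⟨w, fun _ => h⟩
    · exact ⟨0, fun h => absurd h hU⟩
  choose w hw using hw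
  refine ⟨cnfPrivate_of_le F htk, card_cnf_share k t, fun j f y => ∑ i,
    ∑ e ∈ (sharePoly k t (f i).1).support, ((sharePoly k t (f i).1).coeff e *
      ∏ p ∈ e.support, (if h : j ∉ p.2.1 then y i p.1 ⟨p.2, h⟩ else 0) ^ e p) •
        w (missing e) i j, dualRec G, ?_⟩
  intro f x xs hx
  -- `j ∈ missing e`, and then the weight `w (missing e) i j` vanishes.
  have hEval : (fun j => ∑ i, ∑ e ∈ (sharePoly k t (f i).1).support,
      ((sharePoly k t (f i).1).coeff e * ∏ p ∈ e.support,
        (if h : j ∉ p.2.1 then xs i p.1 p.2 else 0) ^ e p) • w (missing e) i j) =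
      ∑ i, ∑ e ∈ (sharePoly k t (f i).1).support, ((sharePoly k t (f i).1).coeff e *
        ∏ p ∈ e.support, xs i p.1 p.2 ^ e p) • w (missing e) i := by
    ext1 j
    simp only [Finset.sum_apply, Pi.smul_apply]
    refine Finset.sum_congr rfl fun i _ => Finset.sum_congr rfl fun e he => ?_
    by_cases hj : j ∈ missing e
    · rw [(hw _ i (card_missing_le (f i).2 he)).1 j hj, smul_zero, smul_zero]
    · congr 2
      refine Finset.prod_congr rfl fun p hp => ?_
      rw [dif_pos fun hjp => hj (Finset.mem_biUnion.mpr ⟨p, hp, hjp⟩)]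
  refine (congrArg (dualRec G) hEval).trans ?_
  have hterm : ∀ i, dualRec G (∑ e ∈ (sharePoly k t (f i).1).support,
      ((sharePoly k t (f i).1).coeff e *
        ∏ p ∈ e.support, xs i p.1 p.2 ^ e p) • w (missing e) i) =
      MvPolynomial.eval (x i) (f i).1 • Pi.single i 1 := by
    intro i
    rw [← eval_sharePoly (f i).1 (xs i) (x i) (hx i), MvPolynomial.eval_eq, Finset.sum_smul,
      map_sum]
    refine Finset.sum_congr rfl fun e he => ?_
    rw [map_smul, (hw _ i (card_missing_le (f i).2 he)).2]
  rw [map_sum, Finset.sum_congr rfl fun i _ => hterm i]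
  exact (pi_eq_sum_univ' _).symm
end

section
/- Let t, k, ℓ be positive integers with t < k, let F be a finite field, and let b > ℓ/k be an integer. There is a black-box transformation with parameters (t, k, k₀ = binom(k,t), ℓ, F) whose associated LMSSS has all output shares in F^b (and hence information rate ℓ/(kb)) if and only if there is an F-linear code C ⊆ (F^b)^k with rate at least ℓ/(kb) and block distance at least t+1. Moreover, in the 'if' direction, the transformation can be chosen so that for every j ∈ [k], c_j = ℓ·binom(k−1,t), where c_j = Σ_{i=1}^ℓ |{v ∈ [k₀] : j ∈ ψ_i(v)}|. -/
/-!
Write `⟪c, z⟫ = ∑ j a, c j a * z j a` for the standard pairing on `(F^b)^k`. A linear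
reconstruction map `R : (F^b)^k → F^ℓ` and an encoding map `E : F^ℓ → (F^b)^k` are transposes
of each other when `x · R z = ⟪E x, z⟫`. The equivalence rests on the duality: `R` restricted to
the vectors vanishing on the blocks of `T` is onto iff no `E x` with `x ≠ 0` is supported
on `T`. Hence the code spanned by `E` is `ℓ`-dimensional with block distance at least `t + 1`
iff all restrictions of `R` to the complements of `t`-sets `T` are onto.

From a transformation to a code (`code_of_bbt`): given a `t`-set `T`, security provides for each
`i` a summand `y_i^{(v)}` invisible to `T`. Varying only these summands, the sums run over all
of `F^ℓ` while the shares of `T` stay fixed, so `Rec_L` restricted to the complement of `T` is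
onto.

From a code to a transformation (`bbt_of_code`): the indices `v` enumerate the `t`-sets `T_v`,
and `ψ_i(v)` is the complement of `T_v` (CNF sharing). With `s_v` a right inverse of `R` whose
values vanish on `T_v`, party `j` outputs `∑_v s_v(y^{(v)})_j`, where only `v` with `j ∉ T_v`
contribute. The LMSSS shares `x` as a uniform element of the fibre `R z = x`.
-/

open scoped BigOperators

/-- A black-box transformation for `(t, k, k₀, ℓ, F)` with a given replication function `ψ`
and given LMSSS share sizes `bs`: there is a `k`-party `ℓ`-LMSSS `L = (Share_L, Rec_L)`
over `F` (linear sharing and reconstruction with `Rec_L (Share_L x r) = x`) and conversion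
functions `φ_j` (from party `j`'s view `(y_i^{(v)})_{i, v : j ∈ ψ i v}` to `F^{bs j}`) such
that (correctness) for every matrix `(y_i^{(v)})` the converted shares form a valid
`L`-sharing of the sums `(∑_v y_i^{(v)})_i`, and (security) for every coalition
`T ⊆ [k]` with `|T| ≤ t` and every `i`, `|⋃_{j∈T} {v : j ∈ ψ i v}| ≤ k₀ − 1`. -/
def IsBBTWith (F : Type) [Field F] [Fintype F] (t k k₀ ℓ : ℕ) (bs : Fin k → ℕ)
    (ψ : Fin ℓ → Fin k₀ → Finset (Fin k)) : Prop :=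
  ∃ (e : ℕ)
    (ShareL : ((Fin ℓ → F) × (Fin e → F)) →ₗ[F] (∀ j : Fin k, Fin (bs j) → F))
    (RecL : (∀ j : Fin k, Fin (bs j) → F) →ₗ[F] (Fin ℓ → F))
    (φ : ∀ j : Fin k,
      ((i : Fin ℓ) → ({v : Fin k₀ // j ∈ ψ i v} → F)) → (Fin (bs j) → F)),
    (∀ (x : Fin ℓ → F) (r : Fin e → F), RecL (ShareL (x, r)) = x) ∧
    (∀ y : Fin ℓ → Fin k₀ → F, ∃ r : Fin e → F,
      (fun j => φ j (fun i v => y i v.1)) = ShareL ((fun i => ∑ v, y i v), r)) ∧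
    (∀ T : Finset (Fin k), T.card ≤ t → ∀ i : Fin ℓ,
      (Finset.univ.filter (fun v : Fin k₀ => ∃ j ∈ T, j ∈ ψ i v)).card ≤ k₀ - 1)

/-- An `F`-linear code `C ⊆ (F^b)^k` with `dim_F C ≥ ℓ` (rate at least `ℓ/(kb)`) and
block distance at least `dist`. -/
def IsGoodCode (F : Type) [Field F] [Fintype F] (k b ℓ dist : ℕ) : Prop :=
  ∃ C : Submodule F (Fin k → (Fin b → F)),
    ℓ ≤ Module.finrank F C ∧
    ∀ c ∈ C, ∀ c' ∈ C, c ≠ c' → dist ≤ Nat.card {j : Fin k // c j ≠ c' j}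

/-- The standard pairing with a fixed vector `c` of `(F^b)^k`, as a linear functional. -/
def blockPairing {F : Type} [Field F] {k b : ℕ} (c : Fin k → Fin b → F) :
    (Fin k → Fin b → F) →ₗ[F] F where
  toFun z := ∑ j, ∑ a, c j a * z j a
  map_add' x y := by simp [mul_add, Finset.sum_add_distrib]
  map_smul' m x := by simp [Finset.mul_sum, mul_left_comm]

/-- The projection of `(F^b)^k` that sets the blocks indexed by `T` to zero. -/
def zeroBlocks {F : Type} [Field F] {k b : ℕ} (T : Finset (Fin k)) :
    (Fin k → Fin b → F) →ₗ[F] (Fin k → Fin b → F) where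
  toFun z j := if j ∈ T then 0 else z j
  map_add' x y := by ext j a; by_cases h : j ∈ T <;> simp [h]
  map_smul' m x := by ext j a; by_cases h : j ∈ T <;> simp [h]

lemma blockPairing_single {F : Type} [Field F] {k b : ℕ} (c : Fin k → Fin b → F)
    (j : Fin k) (a : Fin b) :
    blockPairing c (Pi.single j (Pi.single a 1)) = c j a := by
  simp only [blockPairing, LinearMap.coe_mk, AddHom.coe_mk]
  rw [Finset.sum_eq_single j, Finset.sum_eq_single a]
  · simp
  · intro a' _ h; simp [h]
  · simp
  · intro j' _ h; simp [h]
  · simp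

lemma surjective_of_dotProduct {F W : Type} [Field F] [AddCommGroup W] [Module F W] {ℓ : ℕ}
    (f : W →ₗ[F] (Fin ℓ → F))
    (h : ∀ x : Fin ℓ → F, (∀ w, ∑ i, x i * f w i = 0) → x = 0) : Function.Surjective f := by
  rw [← LinearMap.dualMap_injective_iff, injective_iff_map_eq_zero]
  intro g hg
  -- the functional `g` is the dot product with its vector of values on the standard basis
  have key : ∀ y : Fin ℓ → F, g y = ∑ i, g (Pi.single i 1) * y i := by
    intro y
    conv_lhs => rw [pi_eq_sum_univ' y]
    simp [map_sum, mul_comm]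
  have hx := h (fun i => g (Pi.single i 1)) (fun w => by
    rw [← key]; exact LinearMap.congr_fun hg w)
  ext i
  simpa using congrFun hx i

/-- In a code of block distance at least `t + 1`, a codeword supported on at most `t` blocks is
zero, being too close to the zero codeword. -/
lemma eq_zero_of_support {F : Type} [Field F] {k b t : ℕ}
    {C : Submodule F (Fin k → Fin b → F)}
    (hC : ∀ c ∈ C, ∀ c' ∈ C, c ≠ c' → t + 1 ≤ Nat.card {j : Fin k // c j ≠ c' j})
    {c : Fin k → Fin b → F} (hc : c ∈ C) {T : Finset (Fin k)} (hT : T.card ≤ t)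
    (h : ∀ j ∉ T, c j = 0) : c = 0 := by
  by_contra hne
  have h1 := hC c hc 0 C.zero_mem hne
  have h2 : Nat.card {j : Fin k // c j ≠ (0 : Fin k → Fin b → F) j} ≤ Nat.card T := by
    refine Nat.card_le_card_of_injective
      (fun j => ⟨j.1, by by_contra hj; exact j.2 (h _ hj)⟩) ?_
    intro x y hxy
    exact Subtype.ext (by simpa using hxy)
  simp at h2 h1
  omega

/-- The code is the image of the transpose of `Rec_L`. The value of `k₀` only matters through
its being positive. -/
lemma code_of_bbt {F : Type} [Field F] [Fintype F] {t k k₀ ℓ b : ℕ}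
    (hk₀ : 0 < k₀) {ψ : Fin ℓ → Fin k₀ → Finset (Fin k)}
    (h : IsBBTWith F t k k₀ ℓ (fun _ => b) ψ) : IsGoodCode F k b ℓ (t + 1) := by
  classical
  obtain ⟨e, S, R, φ, hR, hcor, hsec⟩ := h
  have hval : ∀ y : Fin ℓ → Fin k₀ → F,
      R (fun j => φ j (fun i v => y i v.1)) = fun i => ∑ v, y i v := by
    intro y
    obtain ⟨r, hr⟩ := hcor y
    rw [hr, hR]
  -- `R` is onto already when restricted to vectors vanishing on a set `T` of at most `t` blocks
  have hsurj : ∀ T : Finset (Fin k), T.card ≤ t → ∀ x : Fin ℓ → F,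
      ∃ z : Fin k → Fin b → F, (∀ j ∈ T, z j = 0) ∧ R z = x := by
    intro T hT x
    have hv : ∀ i, ∃ v : Fin k₀, ∀ j ∈ T, j ∉ ψ i v := by
      intro i
      by_contra! hcon
      have h1 := hsec T hT i
      rw [Finset.filter_true_of_mem (fun v _ => hcon v)] at h1
      simp at h1
      omega
    choose v hv using hv
    refine ⟨(fun j => φ j (fun i u => (Pi.single (v i) (x i) : Fin k₀ → F) u.1)) -
      (fun j => φ j (fun i u => (0 : F))), ?_, ?_⟩
    · intro j hj
      rw [Pi.sub_apply, sub_eq_zero]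
      congr 1
      funext i u
      have : u.1 ≠ v i := fun hu => hv i j hj (hu ▸ u.2)
      simp [this]
    · have h0 := hval (fun _ _ => 0)
      have h1 := hval (fun i => Pi.single (v i) (x i))
      rw [map_sub, h1, h0]
      funext i
      simp
  let E : (Fin ℓ → F) →ₗ[F] (Fin k → Fin b → F) :=
    { toFun := fun x j a => ∑ i, x i * R (Pi.single j (Pi.single a 1)) i
      map_add' := fun x y => by ext j a; simp [add_mul, Finset.sum_add_distrib]
      map_smul' := fun m x => by ext j a; simp [Finset.mul_sum, mul_assoc] }
  have hE : ∀ x z, ∑ i, x i * R z i = blockPairing (E x) z := by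
    intro x z
    let D : (Fin ℓ → F) →ₗ[F] F :=
      { toFun := fun y => ∑ i, x i * y i
        map_add' := fun y z => by simp [mul_add, Finset.sum_add_distrib]
        map_smul' := fun m y => by simp [Finset.mul_sum, mul_left_comm] }
    have : D ∘ₗ R = blockPairing (E x) := by
      apply LinearMap.pi_ext'
      intro j
      apply LinearMap.pi_ext'
      intro a
      apply LinearMap.ext_ring
      change D (R (Pi.single j (Pi.single a 1))) =
        blockPairing (E x) (Pi.single j (Pi.single a 1))
      rw [blockPairing_single]
      rfl
    exact LinearMap.congr_fun this z
  have hinj : ∀ x, ∀ T : Finset (Fin k), T.card ≤ t → (∀ j ∉ T, E x j = 0) → x = 0 := by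
    intro x T hT hx
    have : ∀ y : Fin ℓ → F, ∑ i, x i * y i = 0 := by
      intro y
      obtain ⟨z, hz, rfl⟩ := hsurj T hT y
      rw [hE]
      change ∑ j, ∑ a, E x j a * z j a = 0
      refine Finset.sum_eq_zero fun j _ => Finset.sum_eq_zero fun a _ => ?_
      by_cases hj : j ∈ T
      · simp [hz j hj]
      · simp [hx j hj]
    funext i
    simpa [Pi.single_apply] using this (Pi.single i 1)
  have hker : Function.Injective E := by
    rw [injective_iff_map_eq_zero]
    intro x hx
    exact hinj x ∅ (by simp) (fun j _ => by simp [hx])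
  refine ⟨LinearMap.range E, ?_, ?_⟩
  · rw [LinearMap.finrank_range_of_inj hker]; simp
  · rintro _ ⟨x, rfl⟩ _ ⟨x', rfl⟩ hne
    by_contra hlt
    apply hne
    rw [Nat.card_eq_fintype_card, Fintype.card_subtype] at hlt
    have := hinj (x - x') _ (Nat.lt_succ_iff.mp (not_le.mp hlt)) (fun j hj => by
      simpa [sub_eq_zero] using hj)
    rw [sub_eq_zero.mp this]

lemma bbt_of_code {F : Type} [Field F] [Fintype F] {t k ℓ b : ℕ} (htk : t < k)
    (h : IsGoodCode F k b ℓ (t + 1)) :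
    ∃ ψ : Fin ℓ → Fin (k.choose t) → Finset (Fin k),
      IsBBTWith F t k (k.choose t) ℓ (fun _ => b) ψ ∧
      ∀ j : Fin k,
        (∑ i : Fin ℓ, (Finset.univ.filter (fun v : Fin (k.choose t) => j ∈ ψ i v)).card) =
          ℓ * (k - 1).choose t := by
  classical
  obtain ⟨C, hdim, hC⟩ := h
  -- `ℓ` linearly independent codewords, the rows of a generator matrix
  let c : Fin ℓ → Fin k → Fin b → F :=
    fun i => (Module.finBasis F C (Fin.castLE hdim i) : Fin k → Fin b → F)
  have hcC : ∀ i, c i ∈ C := fun i => (Module.finBasis F C (Fin.castLE hdim i)).2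
  have hli : LinearIndependent F c :=
    ((Module.finBasis F C).linearIndependent.map' C.subtype (Submodule.ker_subtype C)).comp
      (Fin.castLE hdim) (Fin.castLE_injective hdim)
  let R : (Fin k → Fin b → F) →ₗ[F] (Fin ℓ → F) := LinearMap.pi fun i => blockPairing (c i)
  have hRE : ∀ (x : Fin ℓ → F) z, ∑ i, x i * R z i = blockPairing (∑ i, x i • c i) z := by
    intro x z
    simp only [R, LinearMap.pi_apply, blockPairing, LinearMap.coe_mk, AddHom.coe_mk,
      Finset.sum_apply, Pi.smul_apply, smul_eq_mul, Finset.mul_sum, Finset.sum_mul, mul_assoc]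
    rw [Finset.sum_comm]
    exact Finset.sum_congr rfl fun j _ => Finset.sum_comm
  have hsec : ∀ T : Finset (Fin k), T.card ≤ t →
      ∃ s : (Fin ℓ → F) →ₗ[F] (Fin k → Fin b → F),
        (∀ x, R (s x) = x) ∧ ∀ x, ∀ j ∈ T, s x j = 0 := by
    intro T hT
    have hs : Function.Surjective (R ∘ₗ zeroBlocks T) := by
      apply surjective_of_dotProduct
      intro x hx
      have h0 : ∑ i, x i • c i = 0 := by
        refine eq_zero_of_support hC (C.sum_mem fun i _ => C.smul_mem _ (hcC i)) hT ?_
        intro j hj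
        funext a
        have h1 := hx (Pi.single j (Pi.single a 1))
        have h2 : zeroBlocks T (Pi.single j (Pi.single a 1) : Fin k → Fin b → F) =
            Pi.single j (Pi.single a 1) := by
          funext j'
          by_cases hj' : j' ∈ T
          · have : j' ≠ j := fun h => hj (h ▸ hj')
            simp [zeroBlocks, this]
          · simp [zeroBlocks, hj']
        simp only [LinearMap.comp_apply] at h1
        rw [h2, hRE, blockPairing_single] at h1
        exact h1
      exact funext (Fintype.linearIndependent_iff.mp hli x h0)
    obtain ⟨g, hg⟩ := LinearMap.exists_rightInverse_of_surjective _ (LinearMap.range_eq_top.2 hs)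
    refine ⟨zeroBlocks T ∘ₗ g, fun x => LinearMap.congr_fun hg x, fun x j hj => ?_⟩
    simp [zeroBlocks, hj]
  have hcard : Fintype.card (Finset.powersetCard t (Finset.univ : Finset (Fin k))) =
      k.choose t := by simp
  let ε := (Fintype.equivFinOfCardEq hcard).symm
  have hε : ∀ v, (ε v).1.card = t := fun v => (Finset.mem_powersetCard.mp (ε v).2).2
  choose s hs hs0 using fun v => hsec (ε v).1 (hε v).le
  obtain ⟨s₀, hs₀, -⟩ := hsec ∅ (by simp)
  let θ : (Fin (Module.finrank F (Fin k → Fin b → F)) → F) ≃ₗ[F] (Fin k → Fin b → F) :=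
    LinearEquiv.ofFinrankEq _ _ (by simp)
  refine ⟨fun _ v => (ε v).1ᶜ, ⟨Module.finrank F (Fin k → Fin b → F),
    -- `(x, r) ↦ s₀ x + (r - s₀ (R r))`: the second summand ranges over the kernel of `R`
    LinearMap.coprod s₀ ((LinearMap.id - s₀ ∘ₗ R) ∘ₗ θ.toLinearMap), R,
    fun j Y => ∑ v, if hv : j ∈ (ε v).1ᶜ then s v (fun i => Y i ⟨v, hv⟩) j else 0,
    ?_, ?_, ?_⟩, ?_⟩
  · intro x r
    simp [hs₀]
  · intro y
    have hz : (fun j => ∑ v, if hv : j ∈ (ε v).1ᶜ then s v (fun i => y i v) j else 0) =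
        ∑ v, s v (fun i => y i v) := by
      funext j
      rw [Finset.sum_apply]
      refine Finset.sum_congr rfl fun v _ => ?_
      split_ifs with hv
      · rfl
      · exact (hs0 v _ j (by simpa using hv)).symm
    have hRz : R (∑ v, s v (fun i => y i v)) = fun i => ∑ v, y i v := by
      rw [map_sum]
      funext i
      simp [hs]
    refine ⟨θ.symm (∑ v, s v (fun i => y i v)), ?_⟩
    refine hz.trans ?_
    rw [← hRz]
    simp
  · intro T hT i
    obtain ⟨T', hTT', -, hT'⟩ := Finset.exists_subsuperset_card_eq (Finset.subset_univ T) hT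
      (by simpa using htk.le)
    let v := ε.symm ⟨T', Finset.mem_powersetCard.mpr ⟨Finset.subset_univ _, hT'⟩⟩
    have hv : (ε v).1 = T' := by simp [v]
    apply Nat.le_sub_one_of_lt
    calc _ < (Finset.univ : Finset (Fin (k.choose t))).card := by
          apply Finset.card_lt_card
          rw [Finset.filter_ssubset]
          refine ⟨v, Finset.mem_univ _, ?_⟩
          rintro ⟨j, hj, hj'⟩
          exact Finset.mem_compl.mp hj' (hv.symm ▸ hTT' hj)
      _ = _ := by simp
  · intro j
    -- the `t`-sets avoiding `j` are the `t`-subsets of a set of size `k - 1`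
    have hcount : (Finset.univ.filter
        (fun v : Fin (k.choose t) => j ∈ (ε v).1ᶜ)).card = (k - 1).choose t := by
      have : (Finset.powersetCard t (Finset.univ.erase j)).card = (k - 1).choose t := by
        simp
      rw [← this]
      refine Finset.card_bij (fun v _ => (ε v).1) ?_ ?_ ?_
      · intro v hv
        refine Finset.mem_powersetCard.mpr ⟨fun x hx => ?_, hε v⟩
        refine Finset.mem_erase.mpr ⟨?_, Finset.mem_univ _⟩
        rintro rfl
        simp [hx] at hv
      · intro v _ w _ hvw
        exact ε.injective (Subtype.ext hvw)
      · intro T hT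
        obtain ⟨hT1, hT2⟩ := Finset.mem_powersetCard.mp hT
        refine ⟨ε.symm ⟨T, Finset.mem_powersetCard.mpr ⟨Finset.subset_univ _, hT2⟩⟩, ?_, ?_⟩
        · have : j ∉ T := fun hj => by simpa using hT1 hj
          simp [this]
        · simp
    simp only [hcount, Finset.sum_const, Finset.card_univ, Fintype.card_fin, smul_eq_mul]

/-- **Black-box transformations with `k₀ = binom(k,t)` are captured by linear codes.**
There is a black-box transformation for `(t, k, k₀ = binom(k,t), ℓ, F)` whose LMSSS has all
shares in `F^b` (hence information rate `ℓ/(kb)`) iff there is an `F`-linear code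
`C ⊆ (F^b)^k` with dimension at least `ℓ` and block distance at least `t+1`; moreover, in
the "if" direction the transformation can be chosen with `c_j = ℓ·binom(k−1,t)` for every
`j ∈ [k]`. -/
theorem blackbox_large_k0_iff_code (F : Type) [Field F] [Fintype F]
    (t k ℓ b : ℕ) (ht : 0 < t) (hk : 0 < k) (hℓ : 0 < ℓ) (htk : t < k) (hb : ℓ < b * k) :
    ((∃ ψ : Fin ℓ → Fin (k.choose t) → Finset (Fin k),
        IsBBTWith F t k (k.choose t) ℓ (fun _ => b) ψ) ↔
      IsGoodCode F k b ℓ (t + 1)) ∧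
    (IsGoodCode F k b ℓ (t + 1) →
      ∃ ψ : Fin ℓ → Fin (k.choose t) → Finset (Fin k),
        IsBBTWith F t k (k.choose t) ℓ (fun _ => b) ψ ∧
        ∀ j : Fin k,
          (∑ i : Fin ℓ,
            (Finset.univ.filter (fun v : Fin (k.choose t) => j ∈ ψ i v)).card) =
            ℓ * (k - 1).choose t) := by
  exact ⟨⟨fun ⟨_, h⟩ => code_of_bbt (Nat.choose_pos htk.le) h,
    fun h => (bbt_of_code htk h).imp fun _ h => h.1⟩, bbt_of_code htk⟩
end
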